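/- For c > 0, the single-bond partition function z(c) = ∫_{U(N)} e^{-c ‖1 - g‖²_{H-S}} dσ(g) satisfies z(c) ≤ (π/(2√2))^{N²} c^{-N²/2} · (2π)^{-N/2} ∏_{j=1}^{N-1} j!, treating c^{-N²/2} as [c^{-1/2}]^{N²}. -/

import Mathlib

/-!
On the unitary group `c ‖1 - g‖² = 2cN - 2c Re tr g`, so one has to bound `∫ exp (2c Re tr g)`.
Translating `g` by a Haar-random unitary of the last `N - 1` coordinates splits
`Re tr g` into the corner entry `Re g₀₀` and `Re tr (h D)`, where `h` is Haar-distributed on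
`U(N - 1)` and `D` is a compression of `g`, hence a contraction. A contraction is the midpoint of
two unitaries, so by convexity of `exp` and invariance replacing `D` by `1` only increases the
integral, and the problem factors over `N`.

A column of `g` is uniform on the unit sphere of `ℂᴺ`, so that the moments of `Re g₀₀` give
`∫ exp (2c Re g₀₀) = ∑ₖ (N-1)! c²ᵏ / (k! (N-1+k)!)`. The Poisson weight bound
`cᵐ / m! ≤ eᶜ / √(2ec)` sums this to at most `e²ᶜ (N-1)! / (cᴺ⁻¹ √(2ec))`. The product over `N` has
the constant `(2e)^(-N/2)`, which is smaller than the one required because `π ^ 2 / 8 ≥ π / e`.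
-/

open Matrix MeasureTheory

noncomputable def hsNormSq {N : ℕ} (M : Matrix (Fin N) (Fin N) ℂ) : ℝ :=
  (Mᴴ * M).trace.re

noncomputable instance (N : ℕ) : MeasurableSpace (Matrix.unitaryGroup (Fin N) ℂ) :=
  borel _

instance (N : ℕ) : BorelSpace (Matrix.unitaryGroup (Fin N) ℂ) :=
  ⟨rfl⟩

section Poisson

open Real

lemma integral_log_le_log_midpoint {m r : ℝ} (hr : 0 ≤ r) (hrm : r < m) :
    ∫ x in (m - r)..(m + r), log x ≤ 2 * r * log m := by
  have hm : 0 < m := hr.trans_lt hrm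
  have tangent : ∀ x ∈ Set.Icc (m - r) (m + r), log x ≤ log m + (m⁻¹ * x - 1) := by
    intro x hx
    have hx0 : 0 < x := by linarith [hx.1]
    have := log_le_sub_one_of_pos (div_pos hx0 hm)
    rw [log_div hx0.ne' hm.ne', div_eq_inv_mul] at this
    linarith
  refine (intervalIntegral.integral_mono_on (by linarith) intervalIntegral.intervalIntegrable_log'
    (Continuous.intervalIntegrable (by fun_prop) _ _) tangent).trans_eq ?_
  rw [intervalIntegral.integral_add (by simp) (Continuous.intervalIntegrable (by fun_prop) _ _),
    intervalIntegral.integral_sub (Continuous.intervalIntegrable (by fun_prop) _ _) (by simp),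
    intervalIntegral.integral_const_mul]
  simp only [intervalIntegral.integral_const, integral_id, smul_eq_mul]
  field_simp
  ring

lemma integral_log_le_log_factorial (k : ℕ) :
    ∫ x in (1 / 2 : ℝ)..(k + 1 / 2), log x ≤ log k.factorial := by
  induction k with
  | zero => simp
  | succ k ih =>
    have hstep := integral_log_le_log_midpoint (m := (k + 1 : ℕ)) (r := 1 / 2) (by norm_num)
      (by push_cast; linarith [k.cast_nonneg (α := ℝ)])
    rw [← intervalIntegral.integral_add_adjacent_intervals (b := (k + 1 / 2 : ℝ))
      intervalIntegral.intervalIntegrable_log' intervalIntegral.intervalIntegrable_log',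
      Nat.factorial_succ, Nat.cast_mul, log_mul (by positivity) (by positivity)]
    rw [show ((k + 1 : ℕ) : ℝ) - 1 / 2 = k + 1 / 2 by push_cast; ring] at hstep
    linarith

/-- Sharp: equality holds at `k = 0`, `x = 1 / 2`. -/
lemma pow_div_factorial_le_exp_div_sqrt {x : ℝ} (hx : 0 < x) (k : ℕ) :
    x ^ k / k.factorial ≤ exp x / √(2 * exp 1 * x) := by
  have hy : (0 : ℝ) < k + 1 / 2 := by positivity
  have hlog : (k + 1 / 2) * (log x - log (k + 1 / 2)) ≤ x - (k + 1 / 2) := by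
    rw [← log_div hx.ne' hy.ne']
    calc (k + 1 / 2) * log (x / (k + 1 / 2)) ≤ (k + 1 / 2) * (x / (k + 1 / 2) - 1) := by
          gcongr; exact log_le_sub_one_of_pos (by positivity)
      _ = x - (k + 1 / 2) := by field_simp
  have hfact := integral_log_le_log_factorial k
  rw [integral_log, one_div, log_inv] at hfact
  rw [← log_le_log_iff (by positivity) (by positivity), log_div (by positivity) (by positivity),
    log_div (by positivity) (by positivity), log_pow, log_exp, log_sqrt (by positivity),
    log_mul (by positivity) hx.ne', log_mul two_ne_zero (exp_ne_zero 1), log_exp]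
  linarith

lemma bessel_series_le {n : ℕ} {x S : ℝ} (hx : 0 < x)
    (hS : HasSum (fun k : ℕ => n.factorial * x ^ (2 * k) / (k.factorial * (n + k).factorial)) S) :
    S ≤ exp (2 * x) * (n.factorial / (x ^ n * √(2 * exp 1 * x))) := by
  have hexp : HasSum (fun k : ℕ => x ^ k / k.factorial) (exp x) := by
    rw [exp_eq_exp_ℝ]
    exact NormedSpace.expSeries_div_hasSum_exp x
  calc S ≤ exp x * (n.factorial / x ^ n * (exp x / √(2 * exp 1 * x))) := by
        refine hasSum_le (fun k => ?_) hS (hexp.mul_right _)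
        calc n.factorial * x ^ (2 * k) / (k.factorial * (n + k).factorial)
            = x ^ k / k.factorial * (n.factorial / x ^ n * (x ^ (n + k) / (n + k).factorial)) := by
              field_simp
              ring
          _ ≤ x ^ k / k.factorial * (n.factorial / x ^ n * (exp x / √(2 * exp 1 * x))) :=
            mul_le_mul_of_nonneg_left (mul_le_mul_of_nonneg_left
              (pow_div_factorial_le_exp_div_sqrt hx (n + k)) (by positivity)) (by positivity)
    _ = exp (2 * x) * (n.factorial / (x ^ n * √(2 * exp 1 * x))) := by
        rw [two_mul x, exp_add]
        ring

end Poisson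

section Sphere

open ProbabilityTheory
open scoped RealInnerProductSpace

variable {Ω : Type*} [MeasurableSpace Ω] {μ : Measure Ω}

lemma coeff_two_eq_of_eval_eq {p : Polynomial ℝ} {k : ℕ} {m : ℝ}
    (h : ∀ t, p.eval t = (1 + t ^ 2) ^ k * m) : p.coeff 2 = k * m := by
  have hp : p = Polynomial.expand ℝ 2 ((1 + Polynomial.X) ^ k) * Polynomial.C m :=
    Polynomial.funext fun t => by simp [h]
  have hcoeff : (Polynomial.expand ℝ 2 ((1 + Polynomial.X) ^ k)).coeff 2 = k := by
    rw [Polynomial.coeff_expand two_pos]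
    simp [Polynomial.coeff_one_add_X_pow]
  rw [hp, Polynomial.coeff_mul_C, hcoeff]

lemma integral_pow_mul_sq_eq_of_integral_add_mul_pow_eq {X Y : Ω → ℝ}
    (hXY : ∀ i j, Integrable (fun ω => X ω ^ i * Y ω ^ j) μ) (k : ℕ)
    (h : ∀ t, ∫ ω, (X ω + t * Y ω) ^ (2 * (k + 1)) ∂μ
      = (1 + t ^ 2) ^ (k + 1) * ∫ ω, X ω ^ (2 * (k + 1)) ∂μ) :
    (2 * k + 1) * ∫ ω, X ω ^ (2 * k) * Y ω ^ 2 ∂μ = ∫ ω, X ω ^ (2 * (k + 1)) ∂μ := by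
  -- Both sides of `h` are polynomials in `t`; compare their coefficients of `t ^ 2`.
  let p : Polynomial ℝ := ∑ m ∈ Finset.range (2 * (k + 1) + 1), Polynomial.monomial m
    ((∫ ω, X ω ^ (2 * (k + 1) - m) * Y ω ^ m ∂μ) * (2 * (k + 1)).choose m)
  have eval_p (t : ℝ) : p.eval t = ∫ ω, (t * Y ω + X ω) ^ (2 * (k + 1)) ∂μ := by
    simp only [p, add_pow, Polynomial.eval_finsetSum, Polynomial.eval_monomial]
    rw [integral_finsetSum _ fun m _ => ?_]
    · refine Finset.sum_congr rfl fun m _ => ?_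
      rw [← integral_mul_const, ← integral_mul_const]
      congr! 2
      ring
    · convert (hXY (2 * (k + 1) - m) m).mul_const (t ^ m * (2 * (k + 1)).choose m) using 2
      ring
  have hcoeff := coeff_two_eq_of_eval_eq fun t => by
    rw [eval_p, ← h]; simp only [add_comm]
  have hchoose : ((2 * (k + 1)).choose 2 : ℝ) = (k + 1) * (2 * k + 1) := by
    rw [Nat.cast_choose_two]
    push_cast
    ring
  simp only [p, Polynomial.finsetSum_coeff, Polynomial.coeff_monomial, Finset.sum_ite_eq',
    Finset.mem_range, hchoose] at hcoeff
  rw [if_pos (by omega), show 2 * (k + 1) - 2 = 2 * k by omega, Nat.cast_succ] at hcoeff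
  apply mul_left_cancel₀ (show (k + 1 : ℝ) ≠ 0 by positivity)
  linear_combination hcoeff

variable {E : Type*} [NormedAddCommGroup E] [InnerProductSpace ℝ E]

/-- `u` is uniformly distributed on the unit sphere of `E`. Rotation invariance is encoded through
the one-dimensional marginals, which determine the law by the Cramér–Wold theorem. -/
structure IsUniformOnSphere (u : Ω → E) (μ : Measure Ω) : Prop where
  norm_eq_one : ∀ᵐ ω ∂μ, ‖u ω‖ = 1
  identDistrib_inner : ∀ ⦃x y : E⦄, ‖x‖ = ‖y‖ →
    IdentDistrib (fun ω => ⟪x, u ω⟫) (fun ω => ⟪y, u ω⟫) μ μ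

namespace IsUniformOnSphere

variable {u : Ω → E} {x y : E}

lemma abs_inner_le (hu : IsUniformOnSphere u μ) (x : E) : ∀ᵐ ω ∂μ, |⟪x, u ω⟫| ≤ ‖x‖ := by
  filter_upwards [hu.norm_eq_one] with ω hω
  simpa [hω] using abs_real_inner_le_norm x (u ω)

lemma aemeasurable_inner (hu : IsUniformOnSphere u μ) (x : E) :
    AEMeasurable (fun ω => ⟪x, u ω⟫) μ :=
  (hu.identDistrib_inner rfl).aemeasurable_fst

lemma integrable_inner_pow_mul_inner_pow [IsFiniteMeasure μ] (hu : IsUniformOnSphere u μ) (x y : E)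
    (i j : ℕ) : Integrable (fun ω => ⟪x, u ω⟫ ^ i * ⟪y, u ω⟫ ^ j) μ := by
  refine .of_bound (((hu.aemeasurable_inner x).pow_const i).mul
    ((hu.aemeasurable_inner y).pow_const j)).aestronglyMeasurable (‖x‖ ^ i * ‖y‖ ^ j) ?_
  filter_upwards [hu.abs_inner_le x, hu.abs_inner_le y] with ω hx hy
  rw [norm_mul, norm_pow, norm_pow, Real.norm_eq_abs, Real.norm_eq_abs]
  gcongr

lemma integral_inner_pow_mul_inner_sq [IsFiniteMeasure μ] (hu : IsUniformOnSphere u μ)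
    (hxy : ‖x‖ = ‖y‖) (horth : ⟪x, y⟫ = 0) (k : ℕ) :
    (2 * k + 1) * ∫ ω, ⟪x, u ω⟫ ^ (2 * k) * ⟪y, u ω⟫ ^ 2 ∂μ
      = ∫ ω, ⟪x, u ω⟫ ^ (2 * (k + 1)) ∂μ := by
  refine integral_pow_mul_sq_eq_of_integral_add_mul_pow_eq
    (hu.integrable_inner_pow_mul_inner_pow x y) k fun t => ?_
  have hnorm : ‖x + t • y‖ = ‖√(1 + t ^ 2) • x‖ := by
    rw [← sq_eq_sq₀ (norm_nonneg _) (norm_nonneg _), norm_add_sq_real, inner_smul_right, horth,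
      norm_smul, norm_smul, mul_pow, mul_pow, ← hxy, Real.norm_of_nonneg (Real.sqrt_nonneg _),
      Real.sq_sqrt (by positivity), Real.norm_eq_abs, sq_abs]
    ring
  have hlaw := ((hu.identDistrib_inner hnorm).comp
    (measurable_id.pow_const (2 * (k + 1)))).integral_eq
  simpa [Function.comp_def, inner_add_left, real_inner_smul_left, mul_pow, pow_mul √(1 + t ^ 2),
    Real.sq_sqrt (show 0 ≤ 1 + t ^ 2 by positivity), integral_const_mul] using hlaw

lemma integral_inner_basis_pow [IsFiniteMeasure μ] (hu : IsUniformOnSphere u μ) {ι : Type*}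
    [Fintype ι] (b : OrthonormalBasis ι ℝ E) (i : ι) (k : ℕ) :
    (2 * k + 1) * ∫ ω, ⟪b i, u ω⟫ ^ (2 * k) ∂μ
      = (Fintype.card ι + 2 * k) * ∫ ω, ⟪b i, u ω⟫ ^ (2 * (k + 1)) ∂μ := by
  classical
  have parseval : ∫ ω, ⟪b i, u ω⟫ ^ (2 * k) ∂μ
      = ∑ j, ∫ ω, ⟪b i, u ω⟫ ^ (2 * k) * ⟪b j, u ω⟫ ^ 2 ∂μ := by
    rw [← integral_finsetSum _ fun j _ => hu.integrable_inner_pow_mul_inner_pow _ (b j) _ 2]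
    refine integral_congr_ae ?_
    filter_upwards [hu.norm_eq_one] with ω hω
    rw [← Finset.mul_sum, b.sum_sq_inner_right, hω, one_pow, mul_one]
  have mixed_moment (j : ι) : (2 * k + 1) * ∫ ω, ⟪b i, u ω⟫ ^ (2 * k) * ⟪b j, u ω⟫ ^ 2 ∂μ
      = (1 + if i = j then 2 * (k : ℝ) else 0) * ∫ ω, ⟪b i, u ω⟫ ^ (2 * (k + 1)) ∂μ := by
    split_ifs with hij
    · simp only [hij, ← pow_add, mul_add, mul_one]
      ring
    · rw [hu.integral_inner_pow_mul_inner_sq (by simp) (b.inner_eq_zero hij), add_zero, one_mul]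
  rw [parseval, Finset.mul_sum, Finset.sum_congr rfl fun j _ => mixed_moment j, ← Finset.sum_mul]
  simp [Finset.sum_add_distrib]

lemma integral_inner_pow [FiniteDimensional ℝ E] [IsFiniteMeasure μ] (hu : IsUniformOnSphere u μ)
    (hx : ‖x‖ = 1) (k : ℕ) :
    (2 * k + 1) * ∫ ω, ⟪x, u ω⟫ ^ (2 * k) ∂μ
      = (Module.finrank ℝ E + 2 * k) * ∫ ω, ⟪x, u ω⟫ ^ (2 * (k + 1)) ∂μ := by
  obtain ⟨s, b, hxs, hb⟩ :=
    (show Orthonormal ℝ ((↑) : ({x} : Set E) → E) by simp [hx]).exists_orthonormalBasis_extension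
  have hbx : b ⟨x, hxs rfl⟩ = x := congrFun hb _
  rw [Module.finrank_eq_card_basis b.toBasis, ← hbx]
  exact hu.integral_inner_basis_pow b _ k

lemma integral_inner_pow_two_mul [FiniteDimensional ℝ E] [IsProbabilityMeasure μ]
    (hu : IsUniformOnSphere u μ) {n : ℕ} (hn : Module.finrank ℝ E = 2 * (n + 1)) (hx : ‖x‖ = 1)
    (k : ℕ) : ∫ ω, ⟪x, u ω⟫ ^ (2 * k) ∂μ
      = (2 * k).factorial * n.factorial / (4 ^ k * k.factorial * (n + k).factorial) := by
  rw [eq_div_iff (by positivity)]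
  induction k with
  | zero => simp
  | succ k ih =>
    have h := hu.integral_inner_pow hx k
    rw [hn] at h
    rw [show n + (k + 1) = n + k + 1 by ring]
    simp only [show 2 * (k + 1) = 2 * k + 1 + 1 by ring, Nat.factorial_succ] at h ⊢
    push_cast at h ⊢
    linear_combination (2 * (k : ℝ) + 1 + 1) * (2 * k + 1) * ih
      - 2 * (4 : ℝ) ^ k * k.factorial * (n + k).factorial * (k + 1) * h

lemma integral_exp_eq_integral_cosh [IsFiniteMeasure μ] (hu : IsUniformOnSphere u μ) (x : E) :
    ∫ ω, Real.exp ⟪x, u ω⟫ ∂μ = ∫ ω, Real.cosh ⟪x, u ω⟫ ∂μ := by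
  have integrable_exp (y : E) : Integrable (fun ω => Real.exp ⟪y, u ω⟫) μ := by
    refine .of_bound (hu.aemeasurable_inner y).exp.aestronglyMeasurable (Real.exp ‖y‖) ?_
    filter_upwards [hu.abs_inner_le y] with ω hω
    rw [Real.norm_of_nonneg (Real.exp_pos _).le]
    exact Real.exp_le_exp.2 (le_of_abs_le hω)
  have hsymm := ((hu.identDistrib_inner (norm_neg x)).comp Real.measurable_exp).integral_eq
  simp only [Function.comp_def] at hsymm
  simp only [Real.cosh_eq, ← inner_neg_left]
  rw [integral_div, integral_add (integrable_exp x) (integrable_exp (-x)), hsymm, add_self_div_two]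

lemma hasSum_integral_exp [FiniteDimensional ℝ E] [IsProbabilityMeasure μ]
    (hu : IsUniformOnSphere u μ) {n : ℕ} (hn : Module.finrank ℝ E = 2 * (n + 1)) (hx : ‖x‖ = 1)
    (c : ℝ) : HasSum (fun k : ℕ => n.factorial * c ^ (2 * k) / (k.factorial * (n + k).factorial))
      (∫ ω, Real.exp (2 * c * ⟪x, u ω⟫) ∂μ) := by
  have hcosh : ∫ ω, Real.exp (2 * c * ⟪x, u ω⟫) ∂μ = ∫ ω, Real.cosh (2 * c * ⟪x, u ω⟫) ∂μ := by
    simpa only [real_inner_smul_left] using hu.integral_exp_eq_integral_cosh ((2 * c) • x)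
  have term_eq (k : ℕ) : ∫ ω, (2 * c * ⟪x, u ω⟫) ^ (2 * k) / (2 * k).factorial ∂μ
      = n.factorial * c ^ (2 * k) / (k.factorial * (n + k).factorial) := by
    simp only [mul_pow (2 * c)]
    rw [integral_div, integral_const_mul, hu.integral_inner_pow_two_mul hn hx,
      mul_pow, pow_mul 2, show (2 : ℝ) ^ 2 = 4 by norm_num]
    field_simp
  simp only [hcosh, ← term_eq]
  refine hasSum_integral_of_dominated_convergence
    (fun k _ => (2 * c) ^ (2 * k) / (2 * k).factorial) (fun k => ?_) (fun k => ?_) ?_ ?_ ?_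
  · exact ((((hu.aemeasurable_inner x).const_mul _).pow_const _).div_const _).aestronglyMeasurable
  · filter_upwards [hu.abs_inner_le x] with ω hω
    rw [hx] at hω
    rw [norm_div, Real.norm_natCast, norm_pow, pow_mul, pow_mul, Real.norm_eq_abs, sq_abs, mul_pow]
    gcongr
    exact mul_le_of_le_one_right (sq_nonneg _) ((sq_le_one_iff_abs_le_one _).2 hω)
  · exact .of_forall fun _ => (Real.hasSum_cosh _).summable
  · exact integrable_const _
  · exact .of_forall fun _ => Real.hasSum_cosh _

lemma integral_exp_inner_le [FiniteDimensional ℝ E] [IsProbabilityMeasure μ]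
    (hu : IsUniformOnSphere u μ) {n : ℕ} (hn : Module.finrank ℝ E = 2 * (n + 1)) (hx : ‖x‖ = 1)
    {c : ℝ} (hc : 0 < c) : ∫ ω, Real.exp (2 * c * ⟪x, u ω⟫) ∂μ
      ≤ Real.exp (2 * c) * (n.factorial / (c ^ n * √(2 * Real.exp 1 * c))) :=
  bessel_series_le hc (hu.hasSum_integral_exp hn hx c)

end IsUniformOnSphere

end Sphere

section Unitary

variable {𝕜 : Type*} [RCLike 𝕜]

lemma exists_linearIsometry_apply_eq_of_norm_eq {E F : Type*} [AddCommGroup E] [Module 𝕜 E]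
    [NormedAddCommGroup F] [InnerProductSpace 𝕜 F] [FiniteDimensional 𝕜 F] {S T : E →ₗ[𝕜] F}
    (h : ∀ x, ‖S x‖ = ‖T x‖) : ∃ L : F →ₗᵢ[𝕜] F, ∀ x, L (S x) = T x := by
  obtain ⟨s, hs⟩ := S.rangeRestrict.exists_rightInverse_of_surjective S.range_rangeRestrict
  have hSs (y : S.range) : S (s y) = y := congrArg Subtype.val (LinearMap.congr_fun hs y)
  let L₀ : S.range →ₗᵢ[𝕜] F := ⟨T ∘ₗ s, fun y => by
    rw [LinearMap.comp_apply, ← h, hSs, Submodule.coe_norm]⟩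
  refine ⟨L₀.extend, fun x => ?_⟩
  have hker : ‖T (s (S.rangeRestrict x) - x)‖ = 0 := by rw [← h, map_sub, hSs]; simp
  calc L₀.extend (S x) = T (s (S.rangeRestrict x)) := L₀.extend_apply (S.rangeRestrict x)
    _ = T x := by rwa [norm_eq_zero, map_sub, sub_eq_zero] at hker

variable {ι κ : Type*} [Fintype ι] [DecidableEq ι] [Finite κ]

lemma exists_unitary_mul_eq_of_conjTranspose_mul_self_eq {A B : Matrix ι κ 𝕜}
    (h : Aᴴ * A = Bᴴ * B) : ∃ W : unitaryGroup ι 𝕜, (W : Matrix ι ι 𝕜) * A = B := by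
  classical
  have := Fintype.ofFinite κ
  have norm_sq_toEuclideanLin (M : Matrix ι κ 𝕜) (x : EuclideanSpace 𝕜 κ) :
      ‖toEuclideanLin M x‖ ^ 2 = RCLike.re (star x.ofLp ᵥ* (Mᴴ * M) ⬝ᵥ x.ofLp) := by
    rw [← inner_self_eq_norm_sq (𝕜 := 𝕜), EuclideanSpace.inner_eq_star_dotProduct, dotProduct_comm]
    simp [star_mulVec, dotProduct_mulVec, vecMul_vecMul]
  obtain ⟨L, hL⟩ := exists_linearIsometry_apply_eq_of_norm_eq (S := toEuclideanLin A)
    (T := toEuclideanLin B) fun x => by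
      rw [← sq_eq_sq₀ (norm_nonneg _) (norm_nonneg _), norm_sq_toEuclideanLin,
        norm_sq_toEuclideanLin, h]
  obtain ⟨W, hW⟩ := EquivLike.surjective (toEuclideanCLM (n := ι) (𝕜 := 𝕜)) L.toContinuousLinearMap
  have hWW : star W * W = 1 := by
    apply EquivLike.injective (toEuclideanCLM (n := ι) (𝕜 := 𝕜))
    rw [map_mul, map_star, hW, map_one, ContinuousLinearMap.star_eq_adjoint]
    exact (ContinuousLinearMap.norm_map_iff_adjoint_comp_self _).1 L.norm_map
  refine ⟨⟨W, mem_unitaryGroup_iff'.2 hWW⟩, toEuclideanLin.injective (LinearMap.ext fun x => ?_)⟩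
  rw [← hL, ← L.coe_toContinuousLinearMap, ← hW]
  simp [toEuclideanLin, toLpLin_apply, mulVec_mulVec]

open scoped ComplexOrder MatrixOrder Matrix.Norms.L2Operator in
lemma exists_eq_inv_two_smul_unitary_add_unitary {D : Matrix ι ι ℂ} (hD : ‖D‖ ≤ 1) :
    ∃ U V : unitaryGroup ι ℂ, D = (2⁻¹ : ℝ) • ((U : Matrix ι ι ℂ) + V) := by
  -- Polar decomposition `D = W P`, where `P = (U + U*) / 2` with `U = P + i √(1 - P²)`.
  let P := CFC.sqrt (star D * D)
  have hP : IsSelfAdjoint P := (CFC.sqrt_nonneg _).isSelfAdjoint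
  have hPD : star P * P = star D * D := by
    rw [hP.star_eq, CFC.sqrt_mul_sqrt_self _ (star_mul_self_nonneg D)]
  have hnorm : ‖P‖ ≤ 1 := by
    rwa [← sq_le_one_iff₀ (norm_nonneg P), sq, ← CStarRing.norm_star_mul_self, hPD,
      CStarRing.norm_star_mul_self, ← sq, sq_le_one_iff₀ (norm_nonneg D)]
  obtain ⟨W, hW⟩ := exists_unitary_mul_eq_of_conjTranspose_mul_self_eq hPD
  let U := selfAdjoint.unitarySelfAddISMul ⟨P, hP⟩ hnorm
  have hU : (2⁻¹ : ℝ) • ((U : Matrix ι ι ℂ) + star (U : Matrix ι ι ℂ)) = P := by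
    rw [← realPart_apply_coe]
    exact congrArg Subtype.val (selfAdjoint.realPart_unitarySelfAddISMul ⟨P, hP⟩ hnorm)
  exact ⟨W * U, W * star U, by rw [← hW, ← hU, mul_smul_comm, mul_add]; rfl⟩

lemma exists_unitary_mulVec_eq_of_norm_eq {x y : EuclideanSpace ℂ ι} (hxy : ‖x‖ = ‖y‖) :
    ∃ W : unitaryGroup ι ℂ, W.1 *ᵥ x.ofLp = y.ofLp := by
  have gram (z : EuclideanSpace ℂ ι) :
      (replicateCol Unit z.ofLp)ᴴ * replicateCol Unit z.ofLp = fun _ _ => (‖z‖ : ℂ) ^ 2 := by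
    ext
    have := inner_self_eq_norm_sq_to_K (𝕜 := ℂ) z
    rw [EuclideanSpace.inner_eq_star_dotProduct, dotProduct_comm] at this
    exact this
  obtain ⟨W, hW⟩ := exists_unitary_mul_eq_of_conjTranspose_mul_self_eq (𝕜 := ℂ)
    ((gram x).trans (by rw [hxy, gram y]))
  exact ⟨W, by rwa [← replicateCol_mulVec, replicateCol_inj] at hW⟩

omit [DecidableEq ι] in
lemma real_inner_eq_re_star_dotProduct (x y : EuclideanSpace ℂ ι) :
    inner ℝ x y = (star x.ofLp ⬝ᵥ y.ofLp).re := by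
  simp [PiLp.inner_apply, dotProduct, mul_comm]

end Unitary

section Isometry

variable {ι κ R : Type*} [Fintype ι] [DecidableEq ι] [Fintype κ]

lemma conj_add_one_sub_mem_unitaryGroup [DecidableEq κ] [CommRing R] [StarRing R]
    {V : Matrix ι κ R} {h : Matrix κ κ R} (hV : Vᴴ * V = 1) (hh : h ∈ unitaryGroup κ R) :
    V * h * Vᴴ + (1 - V * Vᴴ) ∈ unitaryGroup ι R := by
  have cancel_V (M : Matrix κ ι R) : Vᴴ * (V * M) = M := by
    rw [← Matrix.mul_assoc, hV, Matrix.one_mul]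
  have cancel_h (M : Matrix κ ι R) : hᴴ * (h * M) = M := by
    rw [← Matrix.mul_assoc, ← star_eq_conjTranspose, mem_unitaryGroup_iff'.1 hh, Matrix.one_mul]
  rw [mem_unitaryGroup_iff']
  simp only [star_eq_conjTranspose, conjTranspose_add, conjTranspose_sub, conjTranspose_one,
    conjTranspose_mul, conjTranspose_conjTranspose, Matrix.add_mul, Matrix.mul_add, Matrix.sub_mul,
    Matrix.mul_sub, Matrix.mul_one, Matrix.one_mul, Matrix.mul_assoc, cancel_V, cancel_h]
  abel

lemma trace_conj_add_one_sub_mul [CommRing R] [StarRing R]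
    (V : Matrix ι κ R) (h : Matrix κ κ R) (g : Matrix ι ι R) :
    ((V * h * Vᴴ + (1 - V * Vᴴ)) * g).trace
      = (h * (Vᴴ * g * V)).trace + ((1 - V * Vᴴ) * g).trace := by
  rw [Matrix.add_mul, trace_add, Matrix.mul_assoc, Matrix.mul_assoc, trace_mul_comm,
    Matrix.mul_assoc, Matrix.mul_assoc]

omit [DecidableEq ι] in
open scoped Matrix.Norms.L2Operator in
lemma l2_opNorm_le_one_of_conjTranspose_mul_self_eq_one [DecidableEq κ] [RCLike R]
    {A : Matrix ι κ R} (hA : Aᴴ * A = 1) : ‖A‖ ≤ 1 := by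
  have h1 : ‖(1 : Matrix κ κ R)‖ ≤ 1 := IsStarProjection.norm_le _ (.one _)
  rwa [← hA, l2_opNorm_conjTranspose_mul_self, ← sq, sq_le_one_iff₀ (norm_nonneg A)] at h1

open scoped Matrix.Norms.L2Operator in
lemma l2_opNorm_conjTranspose_mul_mul_le_one [DecidableEq κ] [RCLike R]
    {V : Matrix ι κ R} {g : Matrix ι ι R} (hV : Vᴴ * V = 1) (hg : g ∈ unitaryGroup ι R) :
    ‖Vᴴ * g * V‖ ≤ 1 := by
  have hV1 := l2_opNorm_le_one_of_conjTranspose_mul_self_eq_one hV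
  have hg1 := l2_opNorm_le_one_of_conjTranspose_mul_self_eq_one (mem_unitaryGroup_iff'.1 hg)
  calc ‖Vᴴ * g * V‖ ≤ ‖Vᴴ‖ * ‖g‖ * ‖V‖ :=
        (l2_opNorm_mul _ _).trans (mul_le_mul_of_nonneg_right (l2_opNorm_mul _ _) (norm_nonneg _))
    _ ≤ 1 * 1 * 1 := by rw [l2_opNorm_conjTranspose]; gcongr
    _ = 1 := by norm_num

omit [Fintype κ] in
lemma conjTranspose_mul_self_one_submatrix [DecidableEq κ] [CommRing R] [StarRing R] {f : κ → ι}
    (hf : f.Injective) :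
    ((1 : Matrix ι ι R).submatrix id f)ᴴ * (1 : Matrix ι ι R).submatrix id f = 1 := by
  rw [conjTranspose_submatrix, conjTranspose_one, ← submatrix_mul _ _ _ _ _ Function.bijective_id,
    Matrix.one_mul, submatrix_one _ hf]

lemma one_sub_one_submatrix_succ_mul_conjTranspose [CommRing R] [StarRing R] (n : ℕ) :
    1 - (1 : Matrix (Fin (n + 1)) (Fin (n + 1)) R).submatrix id Fin.succ
      * ((1 : Matrix (Fin (n + 1)) (Fin (n + 1)) R).submatrix id Fin.succ)ᴴ = single 0 0 1 := by
  ext i j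
  cases i using Fin.cases <;> cases j using Fin.cases <;>
    simp [mul_apply, one_apply, (Fin.succ_ne_zero _).symm]

end Isometry

section Haar

variable {ι κ : Type*} [Fintype ι] [DecidableEq ι] [Fintype κ] [DecidableEq κ]

instance compactSpace_unitaryGroup : CompactSpace (unitaryGroup ι ℂ) := by
  have hK : IsCompact (Set.univ.pi fun _ : ι => Set.univ.pi fun _ : ι =>
      Metric.closedBall (0 : ℂ) 1) :=
    isCompact_univ_pi fun _ => isCompact_univ_pi fun _ => isCompact_closedBall _ _
  have hclosed : IsClosed (unitaryGroup ι ℂ : Set (Matrix ι ι ℂ)) := isClosed_unitary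
  refine isCompact_iff_compactSpace.1 (hK.of_isClosed_subset hclosed fun A hA => ?_)
  exact fun i _ j _ => mem_closedBall_zero_iff.2 (entry_norm_bound_of_unitary hA i j)

variable [MeasurableSpace (unitaryGroup ι ℂ)] [BorelSpace (unitaryGroup ι ℂ)]
  [MeasurableSpace (unitaryGroup κ ℂ)] [BorelSpace (unitaryGroup κ ℂ)]
  {μ : Measure (unitaryGroup ι ℂ)} [μ.IsMulLeftInvariant]
  {ν : Measure (unitaryGroup κ ℂ)} [ν.IsMulLeftInvariant]

lemma integral_exp_re_trace_mul_unitary (t : ℝ) (W : unitaryGroup ι ℂ) :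
    ∫ g, Real.exp (t * (g.1 * W.1).trace.re) ∂μ = ∫ g, Real.exp (t * g.1.trace.re) ∂μ := by
  rw [← integral_mul_left_eq_self (fun g : unitaryGroup ι ℂ => Real.exp (t * g.1.trace.re)) W]
  simp only [trace_mul_comm _ W.1]
  rfl

open scoped Matrix.Norms.L2Operator in
lemma integral_exp_re_trace_mul_le [IsFiniteMeasure μ] (t : ℝ) {D : Matrix ι ι ℂ} (hD : ‖D‖ ≤ 1) :
    ∫ g, Real.exp (t * (g.1 * D).trace.re) ∂μ ≤ ∫ g, Real.exp (t * g.1.trace.re) ∂μ := by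
  obtain ⟨U, V, rfl⟩ := exists_eq_inv_two_smul_unitary_add_unitary hD
  have integrable_exp (M : Matrix ι ι ℂ) :
      Integrable (fun g : unitaryGroup ι ℂ => Real.exp (t * (g.1 * M).trace.re)) μ :=
    Continuous.integrable_of_hasCompactSupport (by fun_prop) (.of_compactSpace _)
  have midpoint (a b : ℝ) : Real.exp (2⁻¹ * (a + b)) ≤ (Real.exp a + Real.exp b) / 2 := by
    have h := convexOn_exp.2 (Set.mem_univ a) (Set.mem_univ b) (inv_nonneg.2 zero_le_two)
      (inv_nonneg.2 zero_le_two) (by norm_num)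
    simp only [smul_eq_mul, ← mul_add] at h
    linarith
  calc ∫ g, Real.exp (t * (g.1 * ((2⁻¹ : ℝ) • (U.1 + V.1))).trace.re) ∂μ
      ≤ ∫ g, (Real.exp (t * (g.1 * U.1).trace.re) + Real.exp (t * (g.1 * V.1).trace.re)) / 2 ∂μ :=
        integral_mono (integrable_exp _)
          (((integrable_exp _).add (integrable_exp _)).div_const 2) fun g => by
            simpa [mul_add, mul_left_comm t] using
              midpoint (t * (g.1 * U.1).trace.re) (t * (g.1 * V.1).trace.re)
    _ = ∫ g, Real.exp (t * g.1.trace.re) ∂μ := by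
        rw [integral_div, integral_add (integrable_exp _) (integrable_exp _),
          integral_exp_re_trace_mul_unitary, integral_exp_re_trace_mul_unitary, add_self_div_two]

lemma integral_exp_re_trace_le_mul [IsFiniteMeasure μ] [IsProbabilityMeasure ν]
    {V : Matrix ι κ ℂ} (hV : Vᴴ * V = 1) (t : ℝ) :
    ∫ g, Real.exp (t * g.1.trace.re) ∂μ
      ≤ (∫ g, Real.exp (t * ((1 - V * Vᴴ) * g.1).trace.re) ∂μ)
        * ∫ h, Real.exp (t * h.1.trace.re) ∂ν := by
  let F (h : unitaryGroup κ ℂ) (g : unitaryGroup ι ℂ) : ℝ :=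
    Real.exp (t * ((V * h.1 * Vᴴ + (1 - V * Vᴴ)) * g.1).trace.re)
  have hF : Continuous F.uncurry := by
    simp only [F, Function.uncurry_def]; fun_prop
  calc ∫ g, Real.exp (t * g.1.trace.re) ∂μ = ∫ h, ∫ g, F h g ∂μ ∂ν := by
        have shift (h : unitaryGroup κ ℂ) : ∫ g, F h g ∂μ = ∫ g, Real.exp (t * g.1.trace.re) ∂μ :=
          integral_mul_left_eq_self (fun g : unitaryGroup ι ℂ => Real.exp (t * g.1.trace.re))
            ⟨_, conj_add_one_sub_mem_unitaryGroup hV h.2⟩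
        simp [shift]
    _ = ∫ g, ∫ h, F h g ∂ν ∂μ :=
        integral_integral_swap_of_hasCompactSupport hF (.of_compactSpace _)
    _ = ∫ g, Real.exp (t * ((1 - V * Vᴴ) * g.1).trace.re)
          * ∫ h, Real.exp (t * (h.1 * (Vᴴ * g.1 * V)).trace.re) ∂ν ∂μ := by
        simp only [F, trace_conj_add_one_sub_mul, Complex.add_re, mul_add, Real.exp_add,
          integral_mul_const, mul_comm]
    _ ≤ _ := by
        rw [← integral_mul_const]
        refine integral_mono_of_nonneg (.of_forall fun g => ?_)
          (Continuous.integrable_of_hasCompactSupport (by fun_prop) (.of_compactSpace _))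
          (.of_forall fun g => ?_)
        · positivity
        · exact mul_le_mul_of_nonneg_left (integral_exp_re_trace_mul_le t
            (l2_opNorm_conjTranspose_mul_mul_le_one hV g.2)) (Real.exp_pos _).le

lemma isUniformOnSphere_col (μ : Measure (unitaryGroup ι ℂ)) [μ.IsMulLeftInvariant] (j : ι) :
    IsUniformOnSphere (fun g : unitaryGroup ι ℂ => WithLp.toLp 2 (g.1.col j)) μ where
  norm_eq_one := .of_forall fun g => by
    have h := congrArg Complex.re (congrFun₂ (mem_unitaryGroup_iff'.1 g.2) j j)
    rw [one_apply_eq, Complex.one_re] at h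
    rw [← sq_eq_sq₀ (norm_nonneg _) zero_le_one, ← real_inner_self_eq_norm_sq,
      real_inner_eq_re_star_dotProduct, one_pow]
    exact h
  identDistrib_inner x y hxy := by
    obtain ⟨W, hW⟩ := exists_unitary_mulVec_eq_of_norm_eq hxy
    have meas (z : EuclideanSpace ℂ ι) : Measurable fun g : unitaryGroup ι ℂ =>
        inner ℝ z (WithLp.toLp 2 (g.1.col j)) := Continuous.measurable <| by
      simp only [real_inner_eq_re_star_dotProduct, col]
      fun_prop
    have shift (g : unitaryGroup ι ℂ) : inner ℝ y (WithLp.toLp 2 ((W * g).1.col j))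
        = inner ℝ x (WithLp.toLp 2 (g.1.col j)) := by
      have hcol : (W * g).1.col j = W.1 *ᵥ g.1.col j := rfl
      have hWW : W.1ᴴ * W.1 = 1 := mem_unitaryGroup_iff'.1 W.2
      rw [real_inner_eq_re_star_dotProduct, real_inner_eq_re_star_dotProduct, hcol, ← hW,
        star_mulVec, ← dotProduct_mulVec, mulVec_mulVec, hWW, one_mulVec]
    refine ⟨(meas x).aemeasurable, (meas y).aemeasurable, ?_⟩
    conv_rhs => rw [← map_mul_left_eq_self μ W, Measure.map_map (meas y) (measurable_const_mul _)]
    exact congrArg (μ.map ·) (funext fun g => (shift g).symm)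

lemma integral_exp_re_apply_le [IsProbabilityMeasure μ] {n : ℕ} (hn : Fintype.card ι = n + 1)
    (i j : ι) {c : ℝ} (hc : 0 < c) : ∫ g, Real.exp (2 * c * (g.1 i j).re) ∂μ
      ≤ Real.exp (2 * c) * (n.factorial / (c ^ n * √(2 * Real.exp 1 * c))) := by
  have hfinrank : Module.finrank ℝ (EuclideanSpace ℂ ι) = 2 * (n + 1) := by
    rw [finrank_real_of_complex, finrank_euclideanSpace, hn]
  have entry_eq_inner (g : unitaryGroup ι ℂ) :
      inner ℝ (EuclideanSpace.single i 1) (WithLp.toLp 2 (g.1.col j)) = (g.1 i j).re := by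
    rw [real_inner_eq_re_star_dotProduct]
    simp
  simpa only [entry_eq_inner] using (isUniformOnSphere_col μ j).integral_exp_inner_le hfinrank
    (x := EuclideanSpace.single i 1) (by simp) hc

lemma integral_exp_re_trace_le {c : ℝ} (hc : 0 < c) (N : ℕ)
    (μ : Measure (unitaryGroup (Fin N) ℂ)) [μ.IsMulLeftInvariant] [IsProbabilityMeasure μ] :
    ∫ g, Real.exp (2 * c * g.1.trace.re) ∂μ ≤ Real.exp (2 * c * N) *
      ∏ n ∈ Finset.range N, n.factorial / (c ^ n * √(2 * Real.exp 1 * c)) := by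
  induction N with
  | zero => simp [trace]
  | succ N ih =>
    let ν : Measure (unitaryGroup (Fin N) ℂ) := Measure.haarMeasure ⊤
    have : IsProbabilityMeasure ν := ⟨Measure.haarMeasure_self⟩
    calc ∫ g, Real.exp (2 * c * g.1.trace.re) ∂μ
        ≤ (∫ g, Real.exp (2 * c * (g.1 0 0).re) ∂μ)
            * ∫ h, Real.exp (2 * c * h.1.trace.re) ∂ν := by
          simpa only [one_sub_one_submatrix_succ_mul_conjTranspose, trace_single_mul, one_smul]
            using integral_exp_re_trace_le_mul (ν := ν)
              (conjTranspose_mul_self_one_submatrix (Fin.succ_injective N)) (2 * c)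
      _ ≤ (Real.exp (2 * c) * (N.factorial / (c ^ N * √(2 * Real.exp 1 * c))))
            * (Real.exp (2 * c * N) *
              ∏ n ∈ Finset.range N, n.factorial / (c ^ n * √(2 * Real.exp 1 * c))) :=
          mul_le_mul (integral_exp_re_apply_le (by simp) 0 0 hc) (ih ν)
            (integral_nonneg fun _ => (Real.exp_pos _).le) (by positivity)
      _ = Real.exp (2 * c * (N + 1 : ℕ)) *
            ∏ n ∈ Finset.range (N + 1), n.factorial / (c ^ n * √(2 * Real.exp 1 * c)) := by
          rw [Finset.prod_range_succ, Nat.cast_succ, mul_add_one (2 * c), Real.exp_add]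
          ring

end Haar

lemma hsNormSq_one_sub {N : ℕ} {g : Matrix (Fin N) (Fin N) ℂ} (hg : g ∈ unitaryGroup (Fin N) ℂ) :
    hsNormSq (1 - g) = 2 * N - 2 * g.trace.re := by
  have hgg : gᴴ * g = 1 := mem_unitaryGroup_iff'.1 hg
  simp only [hsNormSq, conjTranspose_sub, conjTranspose_one, Matrix.sub_mul, Matrix.mul_sub,
    Matrix.one_mul, Matrix.mul_one, hgg, trace_sub, trace_conjTranspose, trace_one,
    Fintype.card_fin, Complex.sub_re, Complex.natCast_re, Complex.star_def, Complex.conj_re]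
  ring

lemma prod_factorial_div_pow_mul_sqrt {c : ℝ} (hc : 0 < c) (N : ℕ) :
    ∏ n ∈ Finset.range N, n.factorial / (c ^ n * √(2 * Real.exp 1 * c))
      = (√c)⁻¹ ^ (N ^ 2) *
        ((2 * Real.exp 1) ^ (-(N : ℝ) / 2) * ∏ j ∈ Finset.Icc 1 (N - 1), (j.factorial : ℝ)) := by
  have hfact : ∏ j ∈ Finset.Icc 1 (N - 1), (j.factorial : ℝ)
      = ∏ n ∈ Finset.range N, (n.factorial : ℝ) := by
    cases N with
    | zero => simp
    | succ N => exact_mod_cast N.prod_Icc_factorial.trans N.prod_range_succ_factorial.symm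
  have hpow : ∏ n ∈ Finset.range N, c ^ n * √c = √c ^ (N ^ 2) := by
    clear hfact
    induction N with
    | zero => simp
    | succ N ih =>
      rw [Finset.prod_range_succ, ih]
      nth_rw 2 [← Real.sq_sqrt hc.le]
      ring
  have hrpow : (2 * Real.exp 1) ^ (-(N : ℝ) / 2) = (√(2 * Real.exp 1) ^ N)⁻¹ := by
    rw [neg_div, Real.rpow_neg (by positivity), Real.sqrt_eq_rpow,
      ← Real.rpow_mul_natCast (by positivity), one_div_mul_eq_div]
  have hdenom (n : ℕ) : c ^ n * √(2 * Real.exp 1 * c) = √(2 * Real.exp 1) * (c ^ n * √c) := by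
    rw [Real.sqrt_mul (by positivity)]
    ring
  simp only [hdenom]
  rw [Finset.prod_div_distrib, Finset.prod_mul_distrib, hpow, hrpow, hfact, Finset.prod_const,
    Finset.card_range, inv_pow]
  field_simp

lemma two_mul_exp_one_rpow_le (N : ℕ) : (2 * Real.exp 1) ^ (-(N : ℝ) / 2)
    ≤ (Real.pi / (2 * √2)) ^ (N ^ 2) * (2 * Real.pi) ^ (-(N : ℝ) / 2) := by
  have hpi := Real.pi_gt_three
  have hsqrt : √2 ^ 2 = 2 := Real.sq_sqrt zero_le_two
  have one_le_base : 1 ≤ Real.pi / (2 * √2) := by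
    rw [one_le_div (by positivity)]
    nlinarith [Real.sqrt_nonneg 2]
  have two_mul_pi_le : 2 * Real.pi ≤ (Real.pi / (2 * √2)) ^ 2 * (2 * Real.exp 1) := by
    rw [div_pow, mul_pow, hsqrt]
    nlinarith [Real.exp_one_gt_d9]
  have hexp : -(N : ℝ) / 2 ≤ 0 := by linarith [N.cast_nonneg (α := ℝ)]
  generalize Real.pi / (2 * √2) = r at *
  have hcancel : r ^ N * (r ^ 2) ^ (-(N : ℝ) / 2) = 1 := by
    rw [← Real.rpow_natCast_mul (by positivity), ← Real.rpow_natCast,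
      ← Real.rpow_add (by positivity)]
    norm_num [mul_div_cancel₀]
  calc (2 * Real.exp 1) ^ (-(N : ℝ) / 2)
      = r ^ N * (r ^ 2 * (2 * Real.exp 1)) ^ (-(N : ℝ) / 2) := by
        rw [Real.mul_rpow (sq_nonneg r) (by positivity), ← mul_assoc, hcancel, one_mul]
    _ ≤ r ^ (N ^ 2) * (2 * Real.pi) ^ (-(N : ℝ) / 2) :=
        mul_le_mul (pow_le_pow_right₀ one_le_base (Nat.le_self_pow two_ne_zero N))
          (Real.rpow_le_rpow_of_nonpos (by positivity) two_mul_pi_le hexp) (by positivity)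
          (by positivity)

theorem single_bond_partition_function_upper_bound_general (N : ℕ) {c : ℝ} (hc : 0 < c)
    (μ : Measure (unitaryGroup (Fin N) ℂ)) [μ.IsMulLeftInvariant] [IsProbabilityMeasure μ] :
    ∫ g, Real.exp (-c * hsNormSq (1 - g.1)) ∂μ ≤ (√c)⁻¹ ^ (N ^ 2) *
      ((2 * Real.exp 1) ^ (-(N : ℝ) / 2) * ∏ j ∈ Finset.Icc 1 (N - 1), (j.factorial : ℝ)) := by
  calc ∫ g, Real.exp (-c * hsNormSq (1 - g.1)) ∂μ
      = Real.exp (-(2 * c * N)) * ∫ g, Real.exp (2 * c * g.1.trace.re) ∂μ := by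
        rw [← integral_const_mul]
        refine integral_congr_ae (.of_forall fun g => ?_)
        simp only [hsNormSq_one_sub g.2, ← Real.exp_add]
        ring_nf
    _ ≤ Real.exp (-(2 * c * N)) * (Real.exp (2 * c * N) *
          ∏ n ∈ Finset.range N, n.factorial / (c ^ n * √(2 * Real.exp 1 * c))) := by
        gcongr
        exact integral_exp_re_trace_le hc N μ
    _ = _ := by
        rw [← mul_assoc, ← Real.exp_add, neg_add_cancel, Real.exp_zero, one_mul,
          prod_factorial_div_pow_mul_sqrt hc]

theorem single_bond_partition_function_upper_bound (N : ℕ) (c : ℝ) (hc : 0 < c)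
    (μ : Measure (Matrix.unitaryGroup (Fin N) ℂ))
    [μ.IsHaarMeasure] [IsProbabilityMeasure μ] :
    (∫ g : Matrix.unitaryGroup (Fin N) ℂ,
        Real.exp (-c * hsNormSq (1 - (g : Matrix (Fin N) (Fin N) ℂ))) ∂μ) ≤
      (Real.pi / (2 * Real.sqrt 2)) ^ (N ^ 2) * ((Real.sqrt c)⁻¹) ^ (N ^ 2) *
        ((2 * Real.pi) ^ (-(N : ℝ) / 2) *
          ∏ j ∈ Finset.Icc 1 (N - 1), (j.factorial : ℝ)) := by
  calc _ ≤ (√c)⁻¹ ^ (N ^ 2) * ((2 * Real.exp 1) ^ (-(N : ℝ) / 2) *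
        ∏ j ∈ Finset.Icc 1 (N - 1), (j.factorial : ℝ)) :=
        single_bond_partition_function_upper_bound_general N hc μ
    _ ≤ (√c)⁻¹ ^ (N ^ 2) * ((Real.pi / (2 * √2)) ^ (N ^ 2) * (2 * Real.pi) ^ (-(N : ℝ) / 2) *
        ∏ j ∈ Finset.Icc 1 (N - 1), (j.factorial : ℝ)) := by
        gcongr
        exact two_mul_exp_one_rpow_le N
    _ = _ := by ring
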